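/- arXiv:2304.04010 — 2 statements merged into one kernel-verified Lean document; each statement's English description precedes it below -/
import Mathlib

section
/- Let n ≥ 1 and let F = n^{-1/2} · Σ_{j=1}^n w_j τ(w_j^{(0)}), where w_1,…,w_n, w_1^{(0)},…,w_n^{(0)} are i.i.d. standard Gaussian random variables and τ ∈ C²(ℝ) satisfies |τ(x)| ≤ a + b|x|^γ, |τ'(x)| ≤ a + b|x|^γ and |τ''(x)| ≤ a + b|x|^γ for all x ∈ ℝ, for some constants a, b, γ ≥ 0. Let σ² = E[τ²(Z)] where Z ~ N(0,1), and let N ~ N(0, σ²). Then for every n ≥ 1, d_{TV}(F, N) ≤ (1/√n) · (4/σ²) · √(3(1+√2)) · ‖a + b|Z|^γ‖_{L⁴}², where ‖X‖_{L⁴} = (E[X⁴])^{1/4}. -/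
open MeasureTheory ProbabilityTheory Real

/-- The total variation distance between two distributions:
`sup_B |P(X ∈ B) − P(Y ∈ B)|` over Borel (measurable) sets `B`. -/
noncomputable def dTV {E : Type*} [MeasurableSpace E] (μ ν : Measure E) : ℝ :=
  ⨆ B : {B : Set E // MeasurableSet B}, |(μ B.1).toReal - (ν B.1).toReal|

theorem law_lin (n : ℕ) (c : Fin n → ℝ) :
    (Measure.pi fun _ : Fin n => gaussianReal 0 1).map (fun w => ∑ j, c j * w j)
      = gaussianReal 0 (∑ j, c j ^ 2).toNNReal := by
  apply Measure.ext_of_charFun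
  have h := iIndepFun_pi (μ := fun _ : Fin n => gaussianReal 0 1) (X := fun j (x : ℝ) => c j * x)
    (fun j => by fun_prop)
  rw [h.charFun_map_fun_sum_eq_prod (fun j => (by fun_prop : Measurable fun w : Fin n → ℝ => c j * w j).aemeasurable)]
  ext t
  have h1 : ∀ j, (Measure.pi fun _ : Fin n => gaussianReal 0 1).map (fun w => c j * w j)
      = gaussianReal 0 (NNReal.mk (c j ^ 2) (sq_nonneg _)) := by
    intro j
    have := gaussianReal_map_const_mul (μ := 0) (v := 1) (c j)
    rw [← (measurePreserving_eval (fun _ : Fin n => gaussianReal 0 1) j).map_eq,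
      Measure.map_map (by fun_prop) (by fun_prop)] at this
    simpa [Function.comp_def] using this
  simp only [Finset.prod_apply, h1, charFun_gaussianReal]
  rw [← Complex.exp_sum]
  congr 1
  have h0 : 0 ≤ ∑ j, c j ^ 2 := Finset.sum_nonneg fun j _ => sq_nonneg _
  simp only [Real.coe_toNNReal _ h0]
  simp [Finset.sum_div, Finset.sum_mul]

theorem gauss_le (u v : NNReal) (hu : 0 < u) (huv : u ≤ v) (B : Set ℝ) :
    (gaussianReal 0 u).real B ≤ sqrt (v / u) * (gaussianReal 0 v).real B := by
  have hv : 0 < v := hu.trans_le huv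
  have hu' : (0:ℝ) < u := hu
  have hv' : (0:ℝ) < v := hv
  have huv' : (u:ℝ) ≤ v := huv
  rw [measureReal_def, measureReal_def, gaussianReal_apply_eq_integral _ hu.ne',
    gaussianReal_apply_eq_integral _ hv.ne',
    ENNReal.toReal_ofReal (integral_nonneg fun _ => gaussianPDFReal_nonneg _ _ _),
    ENNReal.toReal_ofReal (integral_nonneg fun _ => gaussianPDFReal_nonneg _ _ _),
    ← integral_const_mul]
  apply integral_mono (integrable_gaussianPDFReal _ _).integrableOn
    ((integrable_gaussianPDFReal _ _).integrableOn.const_mul _)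
  intro x
  simp only [gaussianPDFReal]
  have e1 : sqrt (v/u) * (sqrt (2*π*v))⁻¹ = (sqrt (2*π*u))⁻¹ := by
    rw [← Real.sqrt_inv, ← Real.sqrt_inv, ← Real.sqrt_mul (by positivity)]
    congr 1
    field_simp
  rw [← mul_assoc, e1]
  apply mul_le_mul_of_nonneg_left _ (by positivity)
  apply Real.exp_le_exp.2
  rw [neg_div, neg_div]
  gcongr

theorem gauss_tv (u v : NNReal) (hu : 0 < u) (huv : u ≤ v) (B : Set ℝ) (hB : MeasurableSet B) :
    |(gaussianReal 0 u).real B - (gaussianReal 0 v).real B| ≤ sqrt (v / u) - 1 := by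
  have h1 := gauss_le u v hu huv B
  have h2 := gauss_le u v hu huv Bᶜ
  rw [probReal_compl_eq_one_sub hB, probReal_compl_eq_one_sub hB] at h2
  have h3 : 1 ≤ sqrt ((v:ℝ) / u) := by
    rw [Real.one_le_sqrt, one_le_div (by exact_mod_cast hu)]; exact_mod_cast huv
  have h4 : (gaussianReal 0 v).real B ≤ 1 := measureReal_le_one
  have h5 : 0 ≤ (gaussianReal 0 v).real B := measureReal_nonneg
  rw [abs_le]; constructor <;> nlinarith

theorem gauss_tv2 (r s : ℝ) (hr : 0 ≤ r) (hs : 0 < s) (B : Set ℝ) (hB : MeasurableSet B) :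
    |(gaussianReal 0 r.toNNReal).real B - (gaussianReal 0 s.toNNReal).real B|
      ≤ 2 / s * |r - s| := by
  have one : |(gaussianReal 0 r.toNNReal).real B - (gaussianReal 0 s.toNNReal).real B| ≤ 1 := by
    have h4 : (gaussianReal 0 r.toNNReal).real B ≤ 1 := measureReal_le_one
    have h5 : 0 ≤ (gaussianReal 0 r.toNNReal).real B := measureReal_nonneg
    have h4 : (gaussianReal 0 s.toNNReal).real B ≤ 1 := measureReal_le_one
    have h5 : 0 ≤ (gaussianReal 0 s.toNNReal).real B := measureReal_nonneg
    rw [abs_le]; constructor <;> linarith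
  rcases le_total s r with h | h
  · rw [abs_sub_comm]
    refine (gauss_tv _ _ (by simpa using hs) (Real.toNNReal_le_toNNReal h) B hB).trans ?_
    rw [Real.coe_toNNReal _ hr, Real.coe_toNNReal _ hs.le, abs_of_nonneg (by linarith)]
    have h1 : 1 ≤ r / s := (one_le_div hs).2 h
    have : sqrt (r/s) ≤ r/s := Real.sqrt_le_iff.2 ⟨by linarith, by nlinarith⟩
    have e : 2 / s * (r - s) = 2 * (r/s) - 2 := by field_simp
    rw [e]; linarith
  · rw [abs_of_nonpos (sub_nonpos.2 h)]
    have e : 2 / s * -(r - s) = 2 - 2 * (r/s) := by field_simp; ring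
    rw [e]
    rcases le_total (r/s) (1/2) with h2 | h2
    · linarith
    · have hr' : 0 < r := by
        rcases hr.eq_or_lt with h | h
        · rw [← h] at h2; norm_num at h2
        · exact h
      refine (gauss_tv _ _ (by simpa using hr') (Real.toNNReal_le_toNNReal h) B hB).trans ?_
      rw [Real.coe_toNNReal _ hr, Real.coe_toNNReal _ hs.le]
      have h1 : 1 ≤ s / r := (one_le_div hr').2 h
      have : sqrt (s/r) ≤ s/r := Real.sqrt_le_iff.2 ⟨by linarith, by nlinarith⟩
      have h3 : r/s * (s/r) = 1 := by field_simp
      nlinarith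

theorem memLp_G (a b γ : ℝ) (hγ : 0 ≤ γ) :
    MemLp (fun z : ℝ => a + b * |z| ^ γ) 4 (gaussianReal 0 1) := by
  rcases hγ.eq_or_lt with h | h
  · subst h; simp only [Real.rpow_zero]; exact memLp_const _
  · have h1 := (memLp_id_gaussianReal' (μ := 0) (v := 1) (ENNReal.ofReal (4 * γ)) ENNReal.ofReal_ne_top).norm_rpow_div
      (ENNReal.ofReal γ)
    rw [ENNReal.toReal_ofReal hγ, ← ENNReal.ofReal_div_of_pos h] at h1
    have : ENNReal.ofReal (4 * γ / γ) = 4 := by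
      rw [mul_div_cancel_right₀ _ h.ne']; simp
    rw [this] at h1
    exact (memLp_const a).add (h1.const_mul b)

theorem shallow_nn_tv_bound
    (τ : ℝ → ℝ) (a b γ : ℝ) (ha : 0 ≤ a) (hb : 0 ≤ b) (hγ : 0 ≤ γ)
    (hτ : ContDiff ℝ 2 τ)
    (hτ0 : ∀ x : ℝ, |τ x| ≤ a + b * |x| ^ γ)
    (hτ1 : ∀ x : ℝ, |deriv τ x| ≤ a + b * |x| ^ γ)
    (hτ2 : ∀ x : ℝ, |deriv (deriv τ) x| ≤ a + b * |x| ^ γ)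
    (n : ℕ) (hn : 1 ≤ n) :
    dTV
      (Measure.map
        (fun ω : (Fin n → ℝ) × (Fin n → ℝ) =>
          (Real.sqrt n)⁻¹ * ∑ j, ω.1 j * τ (ω.2 j))
        ((Measure.pi fun _ : Fin n => gaussianReal 0 1).prod
          (Measure.pi fun _ : Fin n => gaussianReal 0 1)))
      (gaussianReal 0 (∫ z, (τ z) ^ 2 ∂gaussianReal 0 1).toNNReal)
      ≤ (Real.sqrt n)⁻¹
        * (4 / (∫ z, (τ z) ^ 2 ∂gaussianReal 0 1))
        * Real.sqrt (3 * (1 + Real.sqrt 2))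
        * ((∫ z, (a + b * |z| ^ γ) ^ 4 ∂gaussianReal 0 1) ^ ((1:ℝ)/4)) ^ 2 := by
  have hc : Continuous τ := hτ.continuous
  have hcm : Measurable τ := hc.measurable
  have hG := memLp_G a b γ hγ
  have hGnn : ∀ z : ℝ, 0 ≤ a + b * |z| ^ γ := fun z => by positivity
  have hτ4 : MemLp τ 4 (gaussianReal 0 1) :=
    hG.mono hc.aestronglyMeasurable (Filter.Eventually.of_forall fun z => by
      rw [Real.norm_eq_abs, Real.norm_eq_abs, abs_of_nonneg (hGnn z)]; exact hτ0 z)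
  have hG4i : Integrable (fun z : ℝ => (a + b * |z| ^ γ) ^ 4) (gaussianReal 0 1) := by
    have := MemLp.integrable_norm_pow (p := 4) (by exact_mod_cast hG) (by norm_num)
    refine this.congr (Filter.Eventually.of_forall fun z => ?_)
    simp only [Real.norm_eq_abs, abs_of_nonneg (hGnn z)]
  have hτ4i : Integrable (fun z : ℝ => (τ z ^ 2) ^ 2) (gaussianReal 0 1) := by
    have := MemLp.integrable_norm_pow (p := 4) (by exact_mod_cast hτ4) (by norm_num)
    refine this.congr (Filter.Eventually.of_forall fun z => ?_)
    simp only [Real.norm_eq_abs]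
    rw [← pow_mul]
    exact Even.pow_abs (by decide) _
  have hτ22 : MemLp (fun z => τ z ^ 2) 2 (gaussianReal 0 1) :=
    (memLp_two_iff_integrable_sq (by fun_prop)).2 hτ4i
  have hτ2i : Integrable (fun z => τ z ^ 2) (gaussianReal 0 1) := hτ22.integrable (by norm_num)
  set s := ∫ z, (τ z) ^ 2 ∂gaussianReal 0 1 with hs_def
  set M := ∫ z, (a + b * |z| ^ γ) ^ 4 ∂gaussianReal 0 1 with hM_def
  have hM0 : 0 ≤ M := integral_nonneg fun z => by positivity
  have hMs : (M ^ ((1:ℝ)/4)) ^ 2 = sqrt M := by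
    rw [← Real.rpow_natCast, ← Real.rpow_mul hM0, Real.sqrt_eq_rpow]; norm_num
  rw [hMs]
  have hs0 : 0 ≤ s := integral_nonneg fun z => sq_nonneg _
  have hnpos : (0:ℝ) < n := by exact_mod_cast hn
  haveI : Nonempty {B : Set ℝ // MeasurableSet B} := ⟨⟨∅, MeasurableSet.empty⟩⟩
  unfold dTV
  apply ciSup_le
  rintro ⟨B, hB⟩
  simp only
  -- the conditional variance
  set V : (Fin n → ℝ) → ℝ := fun y => ∑ j, ((sqrt n)⁻¹ * τ (y j)) ^ 2 with hV_def
  have hV0 : ∀ y, 0 ≤ V y := fun y => Finset.sum_nonneg fun j _ => sq_nonneg _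
  have hVm : Measurable V := by fun_prop
  have hFm : Measurable (fun ω : (Fin n → ℝ) × (Fin n → ℝ) =>
      (Real.sqrt n)⁻¹ * ∑ j, ω.1 j * τ (ω.2 j)) := by fun_prop
  have hcond : ∀ y : Fin n → ℝ, (Measure.pi fun _ : Fin n => gaussianReal 0 1)
      ((fun x => (x, y)) ⁻¹' ((fun ω : (Fin n → ℝ) × (Fin n → ℝ) =>
      (Real.sqrt n)⁻¹ * ∑ j, ω.1 j * τ (ω.2 j)) ⁻¹' B)) = gaussianReal 0 (V y).toNNReal B := by
    intro y
    rw [← law_lin, Measure.map_apply (by fun_prop) hB]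
    congr 1
    ext w
    simp only [Set.mem_preimage, Finset.mul_sum]
    refine iff_of_eq (congrArg (· ∈ B) (Finset.sum_congr rfl fun j _ => by ring))
  have hgm : Measurable fun y : Fin n → ℝ => gaussianReal 0 (V y).toNNReal B := by
    have := measurable_measure_prodMk_right
      (μ := (Measure.pi fun _ : Fin n => gaussianReal 0 1)) (hFm hB)
    simpa only [hcond] using this
  have hlaw : ((Measure.map (fun ω : (Fin n → ℝ) × (Fin n → ℝ) =>
          (Real.sqrt n)⁻¹ * ∑ j, ω.1 j * τ (ω.2 j))
        ((Measure.pi fun _ : Fin n => gaussianReal 0 1).prod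
          (Measure.pi fun _ : Fin n => gaussianReal 0 1))) B).toReal
      = ∫ y, (gaussianReal 0 (V y).toNNReal).real B
          ∂(Measure.pi fun _ : Fin n => gaussianReal 0 1) := by
    rw [Measure.map_apply hFm hB, Measure.prod_apply_symm (hFm hB)]
    simp only [hcond, measureReal_def]
    rw [integral_toReal hgm.aemeasurable (Filter.Eventually.of_forall fun y => measure_lt_top _ _)]
  rw [hlaw]
  rcases hs0.eq_or_lt with hs | hs
  · -- degenerate case
    have h1 : (fun z => τ z ^ 2) =ᵐ[gaussianReal 0 1] 0 :=
      (integral_eq_zero_iff_of_nonneg (fun z => sq_nonneg _) hτ2i).1 (by rw [← hs_def, ← hs])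
    have h2 : (fun z => τ z ^ 2) =ᵐ[volume] 0 :=
      (gaussianReal_absolutelyContinuous' 0 one_ne_zero).ae_le h1
    have h3 : (fun z => τ z ^ 2) = 0 :=
      (Continuous.ae_eq_iff_eq volume (by fun_prop) continuous_zero).1 h2
    have h4 : ∀ z, τ z = 0 := fun z => by simpa using congrFun h3 z
    have h5 : ∀ y, V y = 0 := fun y => by simp [hV_def, h4]
    simp [h5, ← hs, measureReal_def]
  · set P := (Measure.pi fun _ : Fin n => gaussianReal 0 1) with hP
    have hτj : ∀ j : Fin n, MemLp (fun y : Fin n → ℝ => τ (y j) ^ 2) 2 P := fun j =>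
      hτ22.comp_measurePreserving (measurePreserving_eval (fun _ : Fin n => gaussianReal 0 1) j)
    have hVe : V = fun y => (n:ℝ)⁻¹ * (∑ j, fun y : Fin n → ℝ => τ (y j) ^ 2) y := by
      ext y
      simp only [hV_def, Finset.sum_apply, Finset.mul_sum]
      refine Finset.sum_congr rfl fun j _ => ?_
      rw [mul_pow, inv_pow, Real.sq_sqrt hnpos.le]
    have hSL : MemLp (∑ j, fun y : Fin n → ℝ => τ (y j) ^ 2) 2 P :=
      memLp_finsetSum' _ fun j _ => hτj j
    have hVL : MemLp V 2 P := by
      rw [hVe]; exact hSL.const_mul _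
    have hVmean : ∫ y, V y ∂P = s := by
      rw [hVe]
      simp only [Finset.sum_apply]
      rw [integral_const_mul, integral_finsetSum _ fun j _ => (hτj j).integrable (by norm_num)]
      have : ∀ j : Fin n, ∫ y, τ (y j) ^ 2 ∂P = s := fun j =>
        integral_comp_eval (μ := fun _ : Fin n => gaussianReal 0 1) (f := fun z => τ z ^ 2)
          (by fun_prop)
      simp only [this]
      simp
      field_simp
    have hVvar : Var[V; P] ≤ (n:ℝ)⁻¹ * M := by
      rw [hVe, variance_const_mul, hP,
        variance_sum_pi (μ := fun _ : Fin n => gaussianReal 0 1) (X := fun _ z => τ z ^ 2)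
          (fun _ => hτ22)]
      have h1 : Var[fun z => τ z ^ 2; gaussianReal 0 1] ≤ M := by
        refine (variance_le_expectation_sq (by fun_prop)).trans ?_
        refine integral_mono hτ4i hG4i fun z => ?_
        have := pow_le_pow_left₀ (abs_nonneg _) (hτ0 z) 4
        rw [Even.pow_abs (by decide)] at this
        calc _ = τ z ^ 4 := by simp; ring
          _ ≤ _ := this
      rw [Finset.sum_const, Finset.card_univ, Fintype.card_fin, nsmul_eq_mul]
      calc _ = (n:ℝ)⁻¹ * Var[fun z => τ z ^ 2; gaussianReal 0 1] := by field_simp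
        _ ≤ _ := by gcongr
    have hDL : MemLp (fun y => |V y - s|) 2 P := (hVL.sub (memLp_const s)).abs
    have hmean : ∫ y, |V y - s| ∂P ≤ (sqrt n)⁻¹ * sqrt M := by
      rw [← Real.sqrt_inv, ← Real.sqrt_mul (by positivity)]
      apply Real.le_sqrt_of_sq_le
      have h1 := variance_nonneg (fun y => |V y - s|) P
      rw [variance_eq_sub hDL] at h1
      have h2 : ∫ y, ((fun y => |V y - s|) ^ 2) y ∂P = Var[V; P] := by
        rw [variance_eq_integral hVm.aemeasurable, hVmean]
        simp
      linarith
    have hgi : Integrable (fun y => (gaussianReal 0 (V y).toNNReal).real B) P := by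
      refine Integrable.of_bound (C := 1) hgm.ennreal_toReal.aestronglyMeasurable
        (Filter.Eventually.of_forall fun y => ?_)
      rw [Real.norm_eq_abs, abs_of_nonneg measureReal_nonneg]
      exact measureReal_le_one
    calc |∫ y, (gaussianReal 0 (V y).toNNReal).real B ∂P - (gaussianReal 0 s.toNNReal B).toReal|
        = |∫ y, ((gaussianReal 0 (V y).toNNReal).real B
            - (gaussianReal 0 s.toNNReal).real B) ∂P| := by
          rw [integral_sub hgi (integrable_const _)]; simp [measureReal_def]
      _ ≤ ∫ y, |(gaussianReal 0 (V y).toNNReal).real B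
            - (gaussianReal 0 s.toNNReal).real B| ∂P := abs_integral_le_integral_abs
      _ ≤ ∫ y, 2 / s * |V y - s| ∂P := by
          refine integral_mono (hgi.sub (integrable_const _)).abs
            ((hDL.integrable (by norm_num)).const_mul _) fun y => ?_
          exact gauss_tv2 _ _ (hV0 y) hs B hB
      _ = 2 / s * ∫ y, |V y - s| ∂P := integral_const_mul _ _
      _ ≤ 2 / s * ((sqrt n)⁻¹ * sqrt M) := by gcongr
      _ = (sqrt n)⁻¹ * (2 / s) * 1 * sqrt M := by ring
      _ ≤ _ := by
          gcongr
          · norm_num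
          · rw [Real.one_le_sqrt]
            nlinarith [Real.sqrt_nonneg 2]
end

section
/- Fix d ≥ 1, an input x ∈ ℝ^d, and σ_w, σ_b > 0. Let F = n^{-1/2} · σ_w · Σ_{j=1}^n w_j τ(σ_w⟨w_j^{(0)}, x⟩ + σ_b b_j^{(0)}) + σ_b b, where the w_j, the coordinates w_{j,i}^{(0)} of the vectors w_j^{(0)} ∈ ℝ^d, the b_j^{(0)}, and b are all i.i.d. standard Gaussian random variables, and τ ∈ C²(ℝ) satisfies |τ(x)| ≤ a + b|x|^γ, |τ'(x)| ≤ a + b|x|^γ and |τ''(x)| ≤ a + b|x|^γ for all x ∈ ℝ, for some constants a, b, γ ≥ 0. Set Γ = (σ_w²‖x‖² + σ_b²)^{1/2} and σ² = σ_w² · E[τ²(ΓZ)] + σ_b² with Z ~ N(0,1), and let N ~ N(0, σ²). Then for every n ≥ 1, d_{TV}(F, N) ≤ (1/√n) · (4/σ²) · σ_w² · √(Γ² + Γ⁴·(2 + √(3(1 + 2Γ² + 3Γ⁴)))) · ‖a + b|ΓZ|^γ‖_{L⁴}², where ‖X‖_{L⁴} = (E[X⁴])^{1/4}. -/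
open MeasureTheory ProbabilityTheory Real

open scoped ENNReal NNReal

lemma gnn_tv_aux {s t : ℝ≥0} (hs : 0 < s) (hst : s ≤ t) {B : Set ℝ} (hB : MeasurableSet B) :
    (gaussianReal 0 s).real B - (gaussianReal 0 t).real B ≤ 1 - (s:ℝ) / t := by
  have ht : 0 < t := hs.trans_le hst
  have hs' : (0:ℝ) < s := hs
  have ht' : (0:ℝ) < t := ht
  have hst' : (s:ℝ) ≤ t := hst
  have hr : 0 ≤ (s:ℝ) / t := by positivity
  have hr1 : (s:ℝ) / t ≤ 1 := by rw [div_le_one ht']; exact hst'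
  have key : (s:ℝ) / t * (gaussianReal 0 s).real B ≤ (gaussianReal 0 t).real B := by
    have h1 : ∀ {v : ℝ≥0}, v ≠ 0 → (gaussianReal 0 v).real B = ∫ x in B, gaussianPDFReal 0 v x := by
      intro v hv
      rw [measureReal_def, gaussianReal_apply_eq_integral _ hv, ENNReal.toReal_ofReal]
      exact integral_nonneg (fun x => gaussianPDFReal_nonneg _ _ _)
    rw [h1 hs.ne', h1 ht.ne', ← integral_const_mul]
    refine integral_mono ((integrable_gaussianPDFReal 0 s).restrict.const_mul _)
      (integrable_gaussianPDFReal 0 t).restrict ?_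
    intro x
    simp only [gaussianPDFReal, sub_zero]
    have e1 : (s:ℝ)/t * (√(2 * π * s))⁻¹ ≤ (√(2 * π * t))⁻¹ := by
      have : (s:ℝ)/t ≤ √(s/t) := Real.le_sqrt_of_sq_le (by nlinarith)
      calc (s:ℝ)/t * (√(2 * π * s))⁻¹ ≤ √(s/t) * (√(2 * π * s))⁻¹ := by gcongr
        _ = (√(2 * π * t))⁻¹ := by
          rw [Real.sqrt_div hs'.le, Real.sqrt_mul (by positivity) (s:ℝ), Real.sqrt_mul (by positivity) (t:ℝ)]
          have := Real.sqrt_pos.2 hs'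
          have := Real.sqrt_pos.2 ht'
          field_simp
    have e2 : rexp (-x ^ 2 / (2 * s)) ≤ rexp (-x ^ 2 / (2 * t)) := by
      apply Real.exp_le_exp.2
      rw [neg_div, neg_div, neg_le_neg_iff]
      gcongr
    rw [← mul_assoc]
    gcongr
  have h3 : (gaussianReal 0 s).real B ≤ 1 := measureReal_le_one
  nlinarith

lemma gnn_tv {s t : ℝ} (hs : 0 < s) (ht : 0 < t) {B : Set ℝ} (hB : MeasurableSet B) :
    |(gaussianReal 0 s.toNNReal).real B - (gaussianReal 0 t.toNNReal).real B| ≤ |s - t| / t := by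
  have hc : ∀ v : ℝ≥0, (gaussianReal 0 v).real Bᶜ = 1 - (gaussianReal 0 v).real B :=
    fun v => probReal_compl_eq_one_sub hB
  rcases le_total s t with h | h
  · have h1 := gnn_tv_aux (Real.toNNReal_pos.2 hs) (Real.toNNReal_le_toNNReal h) hB
    have h2 := gnn_tv_aux (Real.toNNReal_pos.2 hs) (Real.toNNReal_le_toNNReal h) hB.compl
    rw [hc, hc] at h2
    rw [Real.coe_toNNReal _ hs.le, Real.coe_toNNReal _ ht.le] at h1 h2
    have : |s - t| / t = 1 - s / t := by
      rw [abs_sub_comm, abs_of_nonneg (by linarith)]; field_simp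
    rw [this, abs_le]; constructor <;> linarith
  · have h1 := gnn_tv_aux (Real.toNNReal_pos.2 ht) (Real.toNNReal_le_toNNReal h) hB
    have h2 := gnn_tv_aux (Real.toNNReal_pos.2 ht) (Real.toNNReal_le_toNNReal h) hB.compl
    rw [hc, hc] at h2
    rw [Real.coe_toNNReal _ hs.le, Real.coe_toNNReal _ ht.le] at h1 h2
    have : 1 - t / s ≤ |s - t| / t := by
      rw [abs_of_nonneg (by linarith)]
      rw [← sub_nonneg]
      have : (s - t) / t - (1 - t / s) = (s - t)^2 / (s * t) := by field_simp
      rw [this]; positivity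
    rw [abs_le]; constructor <;> linarith

lemma gnn_lin {k : ℕ} (c : Fin k → ℝ) (s : ℝ) :
    ((Measure.pi fun _ : Fin k => gaussianReal 0 1).prod (gaussianReal 0 1)).map
      (fun p => (∑ j, c j * p.1 j) + s * p.2)
      = gaussianReal 0 (∑ j, c j ^ 2 + s ^ 2).toNNReal := by
  have h1 : (Measure.pi fun _ : Fin k => gaussianReal 0 1).map (fun p => ∑ j, c j * p j)
      = gaussianReal 0 (∑ j, c j ^ 2).toNNReal := by
    have e : (Measure.pi fun _ : Fin k => gaussianReal 0 1).map (fun p j => c j * p j)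
        = Measure.pi fun j => gaussianReal 0 (c j ^ 2).toNNReal := by
      rw [Measure.pi_map_pi (f := fun j y => c j * y) (fun i => by fun_prop)]
      congr with j : 1
      rw [gaussianReal_map_const_mul]
      congr 1
      · simp
      · ext; simp [Real.coe_toNNReal _ (sq_nonneg (c j))]
    have e2 : (Measure.pi fun _ : Fin k => gaussianReal 0 1).map (fun p => ∑ j, c j * p j)
        = (Measure.pi fun j => gaussianReal 0 (c j ^ 2).toNNReal).map (fun p => ∑ j, p j) := by
      rw [← e, Measure.map_map (by fun_prop) (by fun_prop)]; rfl
    rw [e2]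
    refine Measure.ext_of_charFun ?_
    rw [charFun_map_sum_pi_eq_prod]
    ext t
    simp only [Finset.prod_apply, charFun_gaussianReal]
    rw [← Complex.exp_sum]
    congr 1
    rw [Real.coe_toNNReal _ (Finset.sum_nonneg fun i _ => sq_nonneg _)]
    simp only [Real.coe_toNNReal _ (sq_nonneg _)]
    push_cast
    simp [Finset.sum_mul, Finset.sum_div]
  have h2 : (gaussianReal 0 1).map (fun y => s * y) = gaussianReal 0 (s ^ 2).toNNReal := by
    rw [gaussianReal_map_const_mul]
    congr 1
    · simp
    · ext; simp [Real.coe_toNNReal _ (sq_nonneg s)]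
  have h3 : ((Measure.pi fun _ : Fin k => gaussianReal 0 1).prod (gaussianReal 0 1)).map
      (fun p => (∑ j, c j * p.1 j) + s * p.2) =
      (gaussianReal 0 (∑ j, c j ^ 2).toNNReal) ∗ (gaussianReal 0 (s ^ 2).toNNReal) := by
    rw [Measure.conv, ← h1, ← h2, Measure.map_prod_map _ _ (by fun_prop) (by fun_prop),
      Measure.map_map (by fun_prop) (by fun_prop)]
    rfl
  rw [h3, gaussianReal_conv_gaussianReal, add_zero,
    Real.toNNReal_add (Finset.sum_nonneg fun i _ => sq_nonneg _) (sq_nonneg _)]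

lemma gnn_sq_lintegral {α : Type*} [MeasurableSpace α] (μ : Measure α) {f : α → ℝ≥0∞}
    (hf : AEMeasurable f μ) : (∫⁻ x, f x ∂μ) ^ 2 ≤ μ Set.univ * ∫⁻ x, f x ^ 2 ∂μ := by
  have h := ENNReal.lintegral_mul_le_Lp_mul_Lq μ (p := 2) (q := 2)
    (Real.HolderConjugate.two_two) (f := fun _ => 1) (g := f) aemeasurable_const hf
  simp only [Pi.mul_apply, one_mul, ENNReal.one_rpow, lintegral_const] at h
  calc (∫⁻ x, f x ∂μ) ^ 2 ≤ _ := pow_le_pow_left' h 2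
    _ = _ := by
      rw [mul_pow, ← ENNReal.rpow_natCast, ← ENNReal.rpow_natCast, ← ENNReal.rpow_mul, ← ENNReal.rpow_mul]
      norm_num

lemma gnn_poincare {h h' : ℝ → ℝ} (hd : ∀ u, HasDerivAt h (h' u) u) (hc : Continuous h')
    (hi : Integrable h (gaussianReal 0 1)) :
    eVar[h; gaussianReal 0 1] ≤
      ENNReal.ofReal (π / 2) ^ 2 * ∫⁻ u, ‖h' u‖ₑ ^ 2 ∂gaussianReal 0 1 := by
  set μ := gaussianReal 0 1 with hμ
  have hhc : Continuous h := continuous_iff_continuousAt.2 fun u => (hd u).continuousAt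
  have step1 : eVar[h; μ] ≤ ∫⁻ x, ∫⁻ y, ‖h y - h x‖ₑ ^ 2 ∂μ ∂μ := by
    rw [evariance]
    refine lintegral_mono fun x => ?_
    have e : h x - μ[h] = ∫ y, (h x - h y) ∂μ := by
      rw [integral_sub (integrable_const _) hi]; simp
    calc ‖h x - μ[h]‖ₑ ^ 2 ≤ (∫⁻ y, ‖h x - h y‖ₑ ∂μ) ^ 2 := by
          rw [e]; exact pow_le_pow_left' (enorm_integral_le_lintegral_enorm _) 2
      _ ≤ μ Set.univ * ∫⁻ y, ‖h x - h y‖ₑ ^ 2 ∂μ := gnn_sq_lintegral _ (by fun_prop)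
      _ = _ := by
          simp only [measure_univ, one_mul]
          congr with y
          rw [enorm_sub_rev]
  have step2 : ∀ x y, ‖h y - h x‖ₑ ^ 2 ≤ ENNReal.ofReal (π / 2) *
      ∫⁻ θ in Set.Ioc 0 (π / 2), ‖h' (cos θ * x + sin θ * y) * (-sin θ * x + cos θ * y)‖ₑ ^ 2 := by
    intro x y
    have hf : ∫ θ in (0)..(π / 2), h' (cos θ * x + sin θ * y) * (-sin θ * x + cos θ * y)
        = h y - h x := by
      rw [intervalIntegral.integral_eq_sub_of_hasDerivAt
        (f := fun θ => h (cos θ * x + sin θ * y))]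
      · simp
      · intro θ _
        exact (hd _).comp θ (((hasDerivAt_cos θ).mul_const x).add ((hasDerivAt_sin θ).mul_const y))
      · exact Continuous.intervalIntegrable (by fun_prop) _ _
    rw [← hf, intervalIntegral.integral_of_le (by positivity)]
    calc _ ≤ (∫⁻ θ in Set.Ioc 0 (π / 2),
              ‖h' (cos θ * x + sin θ * y) * (-sin θ * x + cos θ * y)‖ₑ) ^ 2 :=
          pow_le_pow_left' (enorm_integral_le_lintegral_enorm _) 2
      _ ≤ _ := gnn_sq_lintegral _ (by fun_prop)
      _ = _ := by simp
  have h2 : ∫⁻ v, ‖v‖ₑ ^ 2 ∂μ = 1 := by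
    have := ofReal_variance (memLp_id_gaussianReal (μ := 0) (v := 1) 2)
    rw [variance_id_gaussianReal, evariance] at this
    simpa using this.symm
  have step3 : ∀ θ : ℝ, ∫⁻ p, ‖h' (cos θ * p.1 + sin θ * p.2) * (-sin θ * p.1 + cos θ * p.2)‖ₑ ^ 2
      ∂(μ.prod μ) = ∫⁻ u, ‖h' u‖ₑ ^ 2 ∂μ := by
    intro θ
    have hrot := IsGaussian.map_rotation_eq_self (μ := μ) (by simp [hμ]) θ
    calc _ = ∫⁻ p, ‖h' p.1 * p.2‖ₑ ^ 2 ∂((μ.prod μ).map (ContinuousLinearMap.rotation θ)) := by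
          rw [lintegral_map (by fun_prop) (by fun_prop)]
          simp [ContinuousLinearMap.rotation_apply]
      _ = ∫⁻ p, ‖h' p.1‖ₑ ^ 2 * ‖p.2‖ₑ ^ 2 ∂(μ.prod μ) := by
          rw [hrot]; simp only [enorm_mul, mul_pow]
      _ = _ := by
          rw [lintegral_prod_mul (f := fun u => ‖h' u‖ₑ ^ 2) (g := fun v => ‖v‖ₑ ^ 2)
            (by fun_prop) (by fun_prop), h2, mul_one]
  calc _ ≤ _ := step1
    _ ≤ ∫⁻ x, ∫⁻ y, ENNReal.ofReal (π / 2) * (∫⁻ θ in Set.Ioc 0 (π / 2),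
          ‖h' (cos θ * x + sin θ * y) * (-sin θ * x + cos θ * y)‖ₑ ^ 2) ∂μ ∂μ :=
        lintegral_mono fun x => lintegral_mono fun y => step2 x y
    _ = ∫⁻ p, ENNReal.ofReal (π / 2) * (∫⁻ θ in Set.Ioc 0 (π / 2),
          ‖h' (cos θ * p.1 + sin θ * p.2) * (-sin θ * p.1 + cos θ * p.2)‖ₑ ^ 2) ∂(μ.prod μ) := by
        rw [lintegral_prod]
        refine (Measurable.const_mul ?_ _).aemeasurable
        apply Measurable.lintegral_prod_right' (f := fun q : (ℝ × ℝ) × ℝ =>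
          ‖h' (cos q.2 * q.1.1 + sin q.2 * q.1.2) * (-sin q.2 * q.1.1 + cos q.2 * q.1.2)‖ₑ ^ 2)
        fun_prop
    _ = ENNReal.ofReal (π / 2) * ∫⁻ θ in Set.Ioc 0 (π / 2), ∫⁻ p,
          ‖h' (cos θ * p.1 + sin θ * p.2) * (-sin θ * p.1 + cos θ * p.2)‖ₑ ^ 2 ∂(μ.prod μ) := by
        rw [lintegral_const_mul', lintegral_lintegral_swap]
        · fun_prop
        · simp
    _ = _ := by
        simp only [step3]
        simp
        ring

lemma gnn_integrable (a b γ Γ : ℝ) (hγ : 0 ≤ γ) :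
    Integrable (fun z => (a + b * |Γ * z| ^ γ) ^ 4) (gaussianReal 0 1) := by
  have h : ∀ r : ℝ, 0 ≤ r → Integrable (fun z : ℝ => |z| ^ r) (gaussianReal 0 1) := by
    intro r hr
    rcases hr.eq_or_lt with rfl | hr
    · simp
    · have := (memLp_id_gaussianReal (μ := 0) (v := 1) r.toNNReal).integrable_norm_rpow
        (by simpa using hr) (by simp)
      simpa [hr.le] using this
  have e : (fun z => (a + b * |Γ * z| ^ γ) ^ 4) = fun z : ℝ => a ^ 4 + 4 * a ^ 3 * b * |Γ| ^ γ * |z| ^ γ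
      + 6 * a ^ 2 * b ^ 2 * (|Γ| ^ γ) ^ 2 * |z| ^ (γ * (2:ℕ))
      + 4 * a * b ^ 3 * (|Γ| ^ γ) ^ 3 * |z| ^ (γ * (3:ℕ)) + b ^ 4 * (|Γ| ^ γ) ^ 4 * |z| ^ (γ * (4:ℕ)) := by
    ext z
    rw [abs_mul, Real.mul_rpow (abs_nonneg _) (abs_nonneg _)]
    simp only [Real.rpow_mul (abs_nonneg z), Real.rpow_natCast]
    ring
  rw [e]
  have h1 := h γ hγ
  have h2 := h (γ * (2:ℕ)) (by positivity)
  have h3 := h (γ * (3:ℕ)) (by positivity)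
  have h4 := h (γ * (4:ℕ)) (by positivity)
  exact ((((integrable_const _).add (h1.const_mul _)).add (h2.const_mul _)).add
    (h3.const_mul _)).add (h4.const_mul _)

lemma gnn_var (τ : ℝ → ℝ) (a b γ Γ : ℝ) (hγ : 0 ≤ γ)
    (hτ : ContDiff ℝ 2 τ)
    (hτ0 : ∀ y : ℝ, |τ y| ≤ a + b * |y| ^ γ)
    (hτ1 : ∀ y : ℝ, |deriv τ y| ≤ a + b * |y| ^ γ) :
    MemLp (fun z => τ (Γ * z) ^ 2) 2 (gaussianReal 0 1) ∧
    Var[fun z => τ (Γ * z) ^ 2; gaussianReal 0 1] ≤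
      16 * Γ ^ 2 * ∫ z, (a + b * |Γ * z| ^ γ) ^ 4 ∂gaussianReal 0 1 := by
  have hM := gnn_integrable a b γ Γ hγ
  have hτc : Continuous τ := hτ.continuous
  have hτ'c : Continuous (deriv τ) := hτ.continuous_deriv (by norm_num)
  have hmem : MemLp (fun z => τ (Γ * z) ^ 2) 2 (gaussianReal 0 1) := by
    rw [memLp_two_iff_integrable_sq (by fun_prop)]
    refine hM.mono' (by fun_prop) (Filter.Eventually.of_forall fun z => ?_)
    rw [Real.norm_eq_abs, abs_of_nonneg (by positivity), ← pow_mul, ← abs_of_nonneg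
      (show 0 ≤ τ (Γ * z) ^ (2 * 2) by rw [pow_mul]; positivity), abs_pow]
    exact pow_le_pow_left₀ (abs_nonneg _) (hτ0 _) 4
  refine ⟨hmem, ?_⟩
  have hd : ∀ z, HasDerivAt (fun z => τ (Γ * z) ^ 2) (2 * τ (Γ * z) * (deriv τ (Γ * z) * Γ)) z := by
    intro z
    have h1 : HasDerivAt τ (deriv τ (Γ * z)) (Γ * z) :=
      (hτ.differentiable (by norm_num) _).hasDerivAt
    have h2 : HasDerivAt (fun z => Γ * z) Γ z := by
      simpa using (hasDerivAt_id z).const_mul Γ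
    have h3 := (h1.comp z h2).pow 2
    have h4 : HasDerivAt (fun z => τ (Γ * z) ^ 2) _ z := h3
    convert h4 using 1
    simp [Function.comp]
  have hp := gnn_poincare hd (by fun_prop) (hmem.integrable (by norm_num))
  have hM0 : 0 ≤ ∫ z, (a + b * |Γ * z| ^ γ) ^ 4 ∂gaussianReal 0 1 :=
    integral_nonneg fun z => by positivity
  have hle : ∫⁻ u, ‖2 * τ (Γ * u) * (deriv τ (Γ * u) * Γ)‖ₑ ^ 2 ∂gaussianReal 0 1
      ≤ ENNReal.ofReal (4 * Γ ^ 2 * ∫ z, (a + b * |Γ * z| ^ γ) ^ 4 ∂gaussianReal 0 1) := by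
    rw [← integral_const_mul, ofReal_integral_eq_lintegral_ofReal (hM.const_mul _)
      (Filter.Eventually.of_forall fun z => by positivity)]
    refine lintegral_mono fun u => ?_
    rw [← ofReal_norm, ← ENNReal.ofReal_pow (norm_nonneg _)]
    apply ENNReal.ofReal_le_ofReal
    rw [Real.norm_eq_abs, sq_abs]
    have e0 := hτ0 (Γ * u)
    have e1 := hτ1 (Γ * u)
    have p0 : τ (Γ * u) ^ 2 ≤ (a + b * |Γ * u| ^ γ) ^ 2 := sq_le_sq' (abs_le.1 e0).1 (abs_le.1 e0).2
    have p1 : deriv τ (Γ * u) ^ 2 ≤ (a + b * |Γ * u| ^ γ) ^ 2 :=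
      sq_le_sq' (abs_le.1 e1).1 (abs_le.1 e1).2
    calc (2 * τ (Γ * u) * (deriv τ (Γ * u) * Γ)) ^ 2
        = 4 * Γ ^ 2 * (τ (Γ * u) ^ 2 * deriv τ (Γ * u) ^ 2) := by ring
      _ ≤ 4 * Γ ^ 2 * ((a + b * |Γ * u| ^ γ) ^ 2 * (a + b * |Γ * u| ^ γ) ^ 2) := by gcongr
      _ = _ := by ring
  rw [← ofReal_variance hmem] at hp
  have hp2 := hp.trans (mul_le_mul_right hle _)
  rw [← ENNReal.ofReal_pow (by positivity), ← ENNReal.ofReal_mul (by positivity),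
    ENNReal.ofReal_le_ofReal_iff (by positivity)] at hp2
  refine hp2.trans ?_
  have hpi : (π / 2) ^ 2 ≤ 4 := by nlinarith [Real.pi_le_four, Real.pi_pos]
  calc _ ≤ 4 * (4 * Γ ^ 2 * ∫ z, (a + b * |Γ * z| ^ γ) ^ 4 ∂gaussianReal 0 1) := by gcongr
    _ = _ := by ring

lemma gnn_L1 {Ω : Type*} [MeasurableSpace Ω] {μ : Measure Ω} [IsProbabilityMeasure μ]
    {T : Ω → ℝ} (hT : MemLp T 2 μ) : ∫ ω, |T ω - ∫ y, T y ∂μ| ∂μ ≤ √(Var[T; μ]) := by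
  set m := ∫ y, T y ∂μ
  have h1 : MemLp (fun ω => |T ω - m|) 2 μ := (hT.sub (memLp_const m)).norm
  have h2 := variance_nonneg (fun ω => |T ω - m|) μ
  rw [variance_eq_sub h1] at h2
  simp only [Pi.pow_apply, sq_abs] at h2
  rw [variance_eq_integral hT.aestronglyMeasurable.aemeasurable]
  exact Real.le_sqrt_of_sq_le (by linarith)

lemma gnn_hidden_law {d n : ℕ} (x : Fin d → ℝ) (σw σb Γ : ℝ)
    (hΓ : Γ ^ 2 = σw ^ 2 * (∑ i, (x i) ^ 2) + σb ^ 2) :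
    ((Measure.pi fun _ : Fin n => Measure.pi fun _ : Fin d => gaussianReal 0 1).prod
      (Measure.pi fun _ : Fin n => gaussianReal 0 1)).map
      (fun h j => σw * (∑ i, h.1 j i * x i) + σb * h.2 j)
      = Measure.pi fun _ : Fin n => (gaussianReal 0 1).map (fun z => Γ * z) := by
  have h1 := measurePreserving_arrowProdEquivProdArrow (Fin d → ℝ) ℝ (Fin n)
    (fun _ => Measure.pi fun _ : Fin d => gaussianReal 0 1) (fun _ => gaussianReal 0 1)
  rw [← h1.map_eq, Measure.map_map (by fun_prop) h1.measurable]
  have e : (gaussianReal 0 1).map (fun z => Γ * z) =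
      ((Measure.pi fun _ : Fin d => gaussianReal 0 1).prod (gaussianReal 0 1)).map
        (fun p => σw * (∑ i, p.1 i * x i) + σb * p.2) := by
    have := gnn_lin (fun i => σw * x i) σb
    have e2 : (fun p : (Fin d → ℝ) × ℝ => (∑ j, σw * x j * p.1 j) + σb * p.2)
        = (fun p => σw * (∑ i, p.1 i * x i) + σb * p.2) := by
      ext p; rw [Finset.mul_sum]; congr 1; exact Finset.sum_congr rfl fun i _ => by ring
    rw [e2] at this
    rw [this, gaussianReal_map_const_mul]
    congr 1
    · simp
    · ext
      rw [Real.coe_toNNReal _ (by positivity)]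
      simp [hΓ, mul_pow, Finset.mul_sum]
  rw [e]
  have : IsProbabilityMeasure (((Measure.pi fun _ : Fin d => gaussianReal 0 1).prod (gaussianReal 0 1)).map
        (fun p => σw * (∑ i, p.1 i * x i) + σb * p.2)) :=
    Measure.isProbabilityMeasure_map (by fun_prop)
  rw [← Measure.pi_map_pi (fun _ => by fun_prop)]
  rfl

lemma gnn_rearrange {α β γ δ : Type*} [MeasurableSpace α] [MeasurableSpace β] [MeasurableSpace γ]
    [MeasurableSpace δ] (μ₁ : Measure α) (μ₂ : Measure β) (μ₃ : Measure γ) (μ₄ : Measure δ)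
    [IsProbabilityMeasure μ₁] [IsProbabilityMeasure μ₂] [IsProbabilityMeasure μ₃]
    [IsProbabilityMeasure μ₄] :
    MeasurePreserving (fun ω : α × β × γ × δ => ((ω.2.1, ω.2.2.1), (ω.1, ω.2.2.2)))
      (μ₁.prod (μ₂.prod (μ₃.prod μ₄))) ((μ₂.prod μ₃).prod (μ₁.prod μ₄)) := by
  have a1 := (MeasurePreserving.id μ₁).prod ((measurePreserving_prodAssoc μ₂ μ₃ μ₄).symm)
  have a2 := (measurePreserving_prodAssoc μ₁ (μ₂.prod μ₃) μ₄).symm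
  have a3 := (Measure.measurePreserving_swap (μ := μ₁) (ν := μ₂.prod μ₃)).prod
    (MeasurePreserving.id μ₄)
  have a4 := measurePreserving_prodAssoc (μ₂.prod μ₃) μ₁ μ₄
  exact a4.comp (a3.comp (a2.comp a1))

theorem gaussian_nn_tv_bound
    (d : ℕ) (hd : 1 ≤ d) (x : Fin d → ℝ) (σw σb : ℝ) (hσw : 0 < σw) (hσb : 0 < σb)
    (τ : ℝ → ℝ) (a b γ : ℝ) (ha : 0 ≤ a) (hb : 0 ≤ b) (hγ : 0 ≤ γ)
    (hτ : ContDiff ℝ 2 τ)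
    (hτ0 : ∀ y : ℝ, |τ y| ≤ a + b * |y| ^ γ)
    (hτ1 : ∀ y : ℝ, |deriv τ y| ≤ a + b * |y| ^ γ)
    (hτ2 : ∀ y : ℝ, |deriv (deriv τ) y| ≤ a + b * |y| ^ γ)
    (Γ : ℝ) (hΓ : Γ = Real.sqrt (σw ^ 2 * (∑ i, (x i) ^ 2) + σb ^ 2))
    (σ2 : ℝ) (hσ2 : σ2 = σw ^ 2 * (∫ z, (τ (Γ * z)) ^ 2 ∂gaussianReal 0 1) + σb ^ 2)
    (n : ℕ) (hn : 1 ≤ n) :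
    dTV
      (Measure.map
        (fun ω : (Fin n → ℝ) × (Fin n → (Fin d → ℝ)) × (Fin n → ℝ) × ℝ =>
          (Real.sqrt n)⁻¹ * σw *
              (∑ j, ω.1 j * τ (σw * (∑ i, ω.2.1 j i * x i) + σb * ω.2.2.1 j))
            + σb * ω.2.2.2)
        ((Measure.pi fun _ : Fin n => gaussianReal 0 1).prod
          ((Measure.pi fun _ : Fin n => Measure.pi fun _ : Fin d => gaussianReal 0 1).prod
            ((Measure.pi fun _ : Fin n => gaussianReal 0 1).prod (gaussianReal 0 1)))))
      (gaussianReal 0 σ2.toNNReal)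
      ≤ (Real.sqrt n)⁻¹
        * (4 / σ2)
        * σw ^ 2
        * Real.sqrt (Γ ^ 2 + Γ ^ 4 * (2 + Real.sqrt (3 * (1 + 2 * Γ ^ 2 + 3 * Γ ^ 4))))
        * ((∫ z, (a + b * |Γ * z| ^ γ) ^ 4 ∂gaussianReal 0 1) ^ ((1:ℝ)/4)) ^ 2 := by
  have hΓ2 : Γ ^ 2 = σw ^ 2 * (∑ i, (x i) ^ 2) + σb ^ 2 := by
    rw [hΓ, Real.sq_sqrt (by positivity)]
  have hΓ0 : 0 ≤ Γ := by rw [hΓ]; positivity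
  have hn0 : (0:ℝ) < n := by exact_mod_cast hn
  have hσ2pos : 0 < σ2 := by
    rw [hσ2]
    have : 0 ≤ ∫ z, (τ (Γ * z)) ^ 2 ∂gaussianReal 0 1 := integral_nonneg fun z => by positivity
    positivity
  have hτc : Continuous τ := hτ.continuous
  obtain ⟨hmem, hvar⟩ := gnn_var τ a b γ Γ hγ hτ hτ0 hτ1
  set M := ∫ z, (a + b * |Γ * z| ^ γ) ^ 4 ∂gaussianReal 0 1 with hMdef
  have hM0 : 0 ≤ M := integral_nonneg fun z => by positivity
  -- the hidden layer
  set P := (Measure.pi fun _ : Fin n => Measure.pi fun _ : Fin d => gaussianReal 0 1).prod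
      (Measure.pi fun _ : Fin n => gaussianReal 0 1) with hP
  set Q := (Measure.pi fun _ : Fin n => gaussianReal 0 1).prod (gaussianReal 0 1) with hQ
  set ν := (gaussianReal 0 1).map (fun z => Γ * z) with hν
  have hνp : IsProbabilityMeasure ν := Measure.isProbabilityMeasure_map (by fun_prop)
  let Y : ((Fin n → (Fin d → ℝ)) × (Fin n → ℝ)) → Fin n → ℝ :=
    fun h j => σw * (∑ i, h.1 j i * x i) + σb * h.2 j
  have hYm : Measurable Y := by fun_prop
  have hYlaw : P.map Y = Measure.pi fun _ : Fin n => ν := gnn_hidden_law x σw σb Γ hΓ2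
  let S : (Fin n → ℝ) → ℝ := fun y => ∑ j, ((Real.sqrt n)⁻¹ * σw * τ (y j)) ^ 2 + σb ^ 2
  have hSpos : ∀ y, 0 < S y := fun y => by positivity
  have hSc : Continuous S := by fun_prop
  let T : (Fin n → ℝ) → ℝ := ∑ j : Fin n, fun y : Fin n → ℝ => τ (y j) ^ 2
  have hτν : MemLp (fun y => τ y ^ 2) 2 ν := by
    rw [hν, memLp_map_measure_iff (by fun_prop) (by fun_prop)]; exact hmem
  have hTmem : MemLp T 2 (Measure.pi fun _ : Fin n => ν) :=
    memLp_finsetSum' _ fun j _ => hτν.comp_measurePreserving (measurePreserving_eval _ j)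
  have hTvar : Var[T; Measure.pi fun _ : Fin n => ν] ≤ n * (16 * Γ ^ 2 * M) := by
    have := variance_sum_pi (μ := fun _ : Fin n => ν) (X := fun _ y => τ y ^ 2) (fun _ => hτν)
    rw [this]
    simp only [Finset.sum_const, Finset.card_univ, Fintype.card_fin, nsmul_eq_mul]
    gcongr
    rw [hν, variance_map (by fun_prop) (by fun_prop)]
    exact hvar
  have hTint : ∫ y, T y ∂(Measure.pi fun _ : Fin n => ν)
      = n * ∫ z, (τ (Γ * z)) ^ 2 ∂gaussianReal 0 1 := by
    have hi : ∀ j : Fin n, Integrable (fun y : Fin n → ℝ => τ (y j) ^ 2)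
        (Measure.pi fun _ : Fin n => ν) := fun j =>
      (hτν.comp_measurePreserving (measurePreserving_eval (fun _ : Fin n => ν) j)).integrable
        (by norm_num)
    simp only [T, Finset.sum_apply]
    rw [integral_finsetSum _ fun j _ => hi j]
    have hj : ∀ j : Fin n, ∫ y : Fin n → ℝ, τ (y j) ^ 2 ∂(Measure.pi fun _ : Fin n => ν)
        = ∫ z, (τ (Γ * z)) ^ 2 ∂gaussianReal 0 1 := by
      intro j
      have he := (measurePreserving_eval (fun _ : Fin n => ν) j).map_eq
      calc _ = ∫ z, τ z ^ 2 ∂((Measure.pi fun _ : Fin n => ν).map (Function.eval j)) := by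
            rw [integral_map (measurable_pi_apply j).aemeasurable (by fun_prop)]
        _ = _ := by
            rw [he, hν, integral_map (by fun_prop) (by fun_prop)]
    simp [hj]
  have hST : ∀ y, S y - σ2 = σw ^ 2 / n * (T y - ∫ y, T y ∂(Measure.pi fun _ : Fin n => ν)) := by
    intro y
    rw [hTint, hσ2]
    simp only [S, T, Finset.sum_apply, mul_pow, ← Finset.mul_sum, inv_pow, Real.sq_sqrt hn0.le]
    field_simp
    ring
  have hL1 : ∫ y, |S y - σ2| ∂(Measure.pi fun _ : Fin n => ν)
      ≤ σw ^ 2 / n * √(n * (16 * Γ ^ 2 * M)) := by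
    simp only [hST, abs_mul, abs_of_nonneg (show 0 ≤ σw ^ 2 / n by positivity)]
    rw [integral_const_mul]
    gcongr
    exact (gnn_L1 hTmem).trans (Real.sqrt_le_sqrt hTvar)
  have hSint : Integrable (fun y => |S y - σ2|) (Measure.pi fun _ : Fin n => ν) := by
    simp only [hST]
    exact (((hTmem.integrable (by norm_num)).sub (integrable_const _)).const_mul _).abs
  -- conditioning on the hidden layer
  let G : ((Fin n → (Fin d → ℝ)) × (Fin n → ℝ)) × ((Fin n → ℝ) × ℝ) → ℝ :=
    fun p => (∑ j, ((Real.sqrt n)⁻¹ * σw * τ (Y p.1 j)) * p.2.1 j) + σb * p.2.2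
  have hGm : Measurable G := by
    have : Measurable τ := hτc.measurable
    fun_prop
  have hmap : Measure.map
        (fun ω : (Fin n → ℝ) × (Fin n → (Fin d → ℝ)) × (Fin n → ℝ) × ℝ =>
          (Real.sqrt n)⁻¹ * σw *
              (∑ j, ω.1 j * τ (σw * (∑ i, ω.2.1 j i * x i) + σb * ω.2.2.1 j))
            + σb * ω.2.2.2)
        ((Measure.pi fun _ : Fin n => gaussianReal 0 1).prod
          ((Measure.pi fun _ : Fin n => Measure.pi fun _ : Fin d => gaussianReal 0 1).prod
            ((Measure.pi fun _ : Fin n => gaussianReal 0 1).prod (gaussianReal 0 1))))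
      = (P.prod Q).map G := by
    have hr := gnn_rearrange (Measure.pi fun _ : Fin n => gaussianReal 0 1)
      (Measure.pi fun _ : Fin n => Measure.pi fun _ : Fin d => gaussianReal 0 1)
      (Measure.pi fun _ : Fin n => gaussianReal 0 1) (gaussianReal 0 1)
    rw [hP, hQ, ← hr.map_eq, Measure.map_map hGm hr.measurable]
    congr 1
    ext ω
    simp only [G, Y, Function.comp]
    rw [Finset.mul_sum]
    congr 1
    exact Finset.sum_congr rfl fun j _ => by ring
  rw [hmap]
  have hcond : ∀ B : Set ℝ, MeasurableSet B →
      ((P.prod Q).map G).real B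
        = ∫ y, (gaussianReal 0 (S y).toNNReal).real B ∂(Measure.pi fun _ : Fin n => ν) ∧
      Integrable (fun y => (gaussianReal 0 (S y).toNNReal).real B)
        (Measure.pi fun _ : Fin n => ν) := by
    intro B hB
    have hmeas : Measurable fun y : Fin n → ℝ => (gaussianReal 0 (S y).toNNReal) B := by
      have h1 : Measurable fun y : Fin n → ℝ => gaussianReal 0 (S y).toNNReal := by
        have h2 : Measurable fun y : Fin n → ℝ => ((0 : ℝ), (S y).toNNReal) := by fun_prop
        exact measurable_gaussianReal.comp h2
      exact (Measure.measurable_coe hB).comp h1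
    have hint : Integrable (fun y => (gaussianReal 0 (S y).toNNReal).real B)
        (Measure.pi fun _ : Fin n => ν) := by
      refine (integrable_const (1:ℝ)).mono' hmeas.ennreal_toReal.aestronglyMeasurable
        (Filter.Eventually.of_forall fun y => ?_)
      rw [Real.norm_eq_abs, abs_of_nonneg measureReal_nonneg]
      exact measureReal_le_one
    refine ⟨?_, hint⟩
    rw [measureReal_def, Measure.map_apply hGm hB, Measure.prod_apply (hGm hB)]
    have h1 : ∀ h, Q (Prod.mk h ⁻¹' (G ⁻¹' B)) = (gaussianReal 0 (S (Y h)).toNNReal) B := by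
      intro h
      have := gnn_lin (fun j => (Real.sqrt n)⁻¹ * σw * τ (Y h j)) σb
      simp only [S]
      rw [← this, Measure.map_apply (by fun_prop) hB]
      rfl
    simp only [h1]
    rw [← lintegral_map (f := fun y => (gaussianReal 0 (S y).toNNReal) B) hmeas hYm, hYlaw,
      ← integral_toReal hmeas.aemeasurable (Filter.Eventually.of_forall fun y => measure_lt_top _ _)]
    rfl
  unfold dTV
  have : Nonempty {B : Set ℝ // MeasurableSet B} := ⟨⟨∅, MeasurableSet.empty⟩⟩
  refine ciSup_le fun ⟨B, hB⟩ => ?_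
  obtain ⟨hc1, hc2⟩ := hcond B hB
  change |((P.prod Q).map G).real B - (gaussianReal 0 σ2.toNNReal).real B| ≤ _
  have hsub : ((P.prod Q).map G).real B - (gaussianReal 0 σ2.toNNReal).real B
      = ∫ y, ((gaussianReal 0 (S y).toNNReal).real B - (gaussianReal 0 σ2.toNNReal).real B)
        ∂(Measure.pi fun _ : Fin n => ν) := by
    rw [integral_sub hc2 (integrable_const _), hc1]; simp
  rw [hsub]
  have hA : Γ ≤ √(Γ ^ 2 + Γ ^ 4 * (2 + √(3 * (1 + 2 * Γ ^ 2 + 3 * Γ ^ 4)))) := by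
    apply Real.le_sqrt_of_sq_le
    have : 0 ≤ Γ ^ 4 * (2 + √(3 * (1 + 2 * Γ ^ 2 + 3 * Γ ^ 4))) := by positivity
    linarith
  have hM4 : (M ^ ((1:ℝ)/4)) ^ 2 = √M := by
    rw [← Real.rpow_natCast, ← Real.rpow_mul hM0, Real.sqrt_eq_rpow]; norm_num
  rw [hM4]
  calc _ ≤ ∫ y, |(gaussianReal 0 (S y).toNNReal).real B - (gaussianReal 0 σ2.toNNReal).real B|
        ∂(Measure.pi fun _ : Fin n => ν) := abs_integral_le_integral_abs
    _ ≤ ∫ y, |S y - σ2| / σ2 ∂(Measure.pi fun _ : Fin n => ν) := by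
        refine integral_mono (hc2.sub (integrable_const _)).abs (hSint.div_const _) fun y => ?_
        exact gnn_tv (hSpos y) hσ2pos hB
    _ = (∫ y, |S y - σ2| ∂(Measure.pi fun _ : Fin n => ν)) / σ2 := integral_div _ _
    _ ≤ (σw ^ 2 / n * √(n * (16 * Γ ^ 2 * M))) / σ2 := by gcongr
    _ = (√n)⁻¹ * (4 / σ2) * σw ^ 2 * Γ * √M := by
        have e : √(n * (16 * Γ ^ 2 * M)) = √n * (4 * Γ * √M) := by
          rw [Real.sqrt_mul hn0.le, Real.sqrt_mul (by positivity),
            show 16 * Γ ^ 2 = (4 * Γ) ^ 2 by ring, Real.sqrt_sq (by positivity)]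
        rw [e]
        have hs : (n:ℝ) = √n * √n := (Real.mul_self_sqrt hn0.le).symm
        have hs0 : 0 < √(n:ℝ) := Real.sqrt_pos.2 hn0
        rw [show σw ^ 2 / (n:ℝ) = σw ^ 2 / (√n * √n) by rw [← hs]]
        field_simp
    _ ≤ _ := by gcongr
end
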